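/- arXiv:1810.00915 — 2 statements merged into one kernel-verified Lean document; each statement's English description precedes it below -/
import Mathlib

section
/- Let n and k be positive integers with n ≥ 2k+2, and let F be an intersecting family of k-element subsets of [n]. Then the minimum degree of F satisfies δ(F) ≤ C(n-2, k-2). -/
open Finset in
/-- number of `k`-sets containing `P` and disjoint from `Q` -/
lemma dEKR_count {n : ℕ} (k : ℕ) (P Q : Finset (Fin n)) (hPQ : Disjoint P Q) (hP : P.card ≤ k) :
    ((univ : Finset (Finset (Fin n))).filter
      (fun T => T.card = k ∧ P ⊆ T ∧ Disjoint T Q)).card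
      = (n - P.card - Q.card).choose (k - P.card) := by
  have h1 : ((univ : Finset (Fin n)) \ (P ∪ Q)).card = n - P.card - Q.card := by
    rw [card_sdiff_of_subset (subset_univ _), card_union_of_disjoint hPQ]
    simp; omega
  rw [← h1, ← card_powersetCard]
  symm
  apply card_bij' (fun T _ => T ∪ P) (fun T _ => T \ P)
  · intro T hT
    simp only [mem_powersetCard, mem_filter, mem_univ, true_and] at hT ⊢
    have hd : Disjoint T P := by
      rw [disjoint_left]; intro a ha hp
      have := hT.1 ha
      simp [hp] at this
    refine ⟨?_, subset_union_right, ?_⟩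
    · rw [card_union_of_disjoint hd]; omega
    · rw [disjoint_union_left]
      refine ⟨?_, hPQ⟩
      rw [disjoint_left]; intro a ha hp
      have := hT.1 ha
      simp [hp] at this
  · intro T hT
    simp only [mem_powersetCard, mem_filter, mem_univ, true_and] at hT ⊢
    refine ⟨?_, ?_⟩
    · intro a ha
      simp only [mem_sdiff, mem_univ, true_and, mem_union] at ha ⊢
      have := disjoint_left.1 hT.2.2 ha.1
      tauto
    · rw [card_sdiff_of_subset hT.2.1]; omega
  · intro T hT
    simp only [mem_powersetCard] at hT
    ext a
    have := @hT.1 a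
    simp only [mem_sdiff, mem_union, mem_univ, true_and] at this ⊢
    tauto
  · intro T hT
    simp only [mem_filter, mem_univ, true_and] at hT
    exact sdiff_union_of_subset hT.2.1

/-- action of a transposition on finsets -/
def dEKR_sw {n : ℕ} (i j : Fin n) : Finset (Fin n) ≃ Finset (Fin n) :=
  (Equiv.swap i j).finsetCongr

lemma dEKR_mem {n : ℕ} (i j x : Fin n) (S : Finset (Fin n)) :
    x ∈ dEKR_sw i j S ↔ Equiv.swap i j x ∈ S := by
  simp only [dEKR_sw, Equiv.finsetCongr_apply, Finset.mem_map, Equiv.coe_toEmbedding]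
  constructor
  · rintro ⟨a, ha, rfl⟩; simpa using ha
  · intro h; exact ⟨_, h, by simp⟩

lemma dEKR_sw_sw {n : ℕ} (i j : Fin n) (S : Finset (Fin n)) :
    dEKR_sw i j (dEKR_sw i j S) = S := by
  ext x; simp [dEKR_mem]

lemma dEKR_card {n : ℕ} (i j : Fin n) (S : Finset (Fin n)) :
    (dEKR_sw i j S).card = S.card := by
  simp [dEKR_sw]

lemma dEKR_inter {n : ℕ} (i j : Fin n) (S T : Finset (Fin n)) :
    dEKR_sw i j S ∩ dEKR_sw i j T = dEKR_sw i j (S ∩ T) := by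
  ext x; simp [dEKR_mem]

lemma dEKR_fix {n : ℕ} (i j : Fin n) (S : Finset (Fin n)) (h : i ∈ S ↔ j ∈ S) :
    dEKR_sw i j S = S := by
  ext x
  rw [dEKR_mem, Equiv.swap_apply_def]
  split_ifs with h1 h2
  · subst h1; exact h.symm
  · subst h2; exact h
  · rfl

/-- the kernel -/
noncomputable def dEKR_K {n : ℕ} (k : ℕ) (p β : ℝ) (S T : Finset (Fin n)) : ℝ :=
  ((S ∩ T).card : ℝ) - k + (if S = T then p else 0) + (if (S ∩ T).card = 0 then β else 0)

lemma dEKR_K_inv {n : ℕ} (k : ℕ) (p β : ℝ) (i j : Fin n) (S T : Finset (Fin n)) :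
    dEKR_K k p β (dEKR_sw i j S) (dEKR_sw i j T) = dEKR_K k p β S T := by
  simp only [dEKR_K, dEKR_inter, dEKR_card, (dEKR_sw i j).injective.eq_iff]

lemma dEKR_K_symm {n : ℕ} (k : ℕ) (p β : ℝ) (S T : Finset (Fin n)) :
    dEKR_K k p β S T = dEKR_K k p β T S := by
  simp only [dEKR_K, Finset.inter_comm S T, eq_comm]

/-- eigenfunctions supported on `k`-sets -/
def dEKR_E {n : ℕ} (k : ℕ) (p β θ : ℝ) (v : Finset (Fin n) → ℝ) : Prop :=
  (∀ S, S.card ≠ k → v S = 0) ∧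
    ∀ S, S.card = k → ∑ T, dEKR_K k p β S T * v T = θ * v S

def dEKR_D {n : ℕ} (i j : Fin n) (v : Finset (Fin n) → ℝ) : Finset (Fin n) → ℝ :=
  fun S => v S - v (dEKR_sw i j S)

lemma dEKR_E_D {n : ℕ} {k : ℕ} {p β θ : ℝ} {v : Finset (Fin n) → ℝ} (i j : Fin n)
    (h : dEKR_E k p β θ v) : dEKR_E k p β θ (dEKR_D i j v) := by
  refine ⟨fun S hS => ?_, fun S hS => ?_⟩
  · simp only [dEKR_D]
    rw [h.1 S hS, h.1 _ (by rw [dEKR_card]; exact hS)]; simp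
  · simp only [dEKR_D, mul_sub, Finset.sum_sub_distrib]
    rw [h.2 S hS, ← h.2 (dEKR_sw i j S) (by rw [dEKR_card]; exact hS)]
    congr 1
    rw [← Equiv.sum_comp (dEKR_sw i j)]
    apply Finset.sum_congr rfl
    intro T _
    rw [dEKR_sw_sw, ← dEKR_K_inv k p β i j S, dEKR_sw_sw]

lemma dEKR_D_anti {n : ℕ} (i j : Fin n) (v : Finset (Fin n) → ℝ) (S : Finset (Fin n)) :
    dEKR_D i j v (dEKR_sw i j S) = - dEKR_D i j v S := by
  simp [dEKR_D, dEKR_sw_sw]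

lemma dEKR_sw_comm {n : ℕ} (i j a b : Fin n) (h1 : i ≠ a) (h2 : i ≠ b) (h3 : j ≠ a) (h4 : j ≠ b)
    (S : Finset (Fin n)) : dEKR_sw i j (dEKR_sw a b S) = dEKR_sw a b (dEKR_sw i j S) := by
  ext x
  simp only [dEKR_mem]
  have : Equiv.swap a b (Equiv.swap i j x) = Equiv.swap i j (Equiv.swap a b x) := by
    simp only [Equiv.swap_apply_def]
    split_ifs <;> simp_all
  rw [this]

lemma dEKR_D_anti2 {n : ℕ} (i j a b : Fin n) (h1 : i ≠ a) (h2 : i ≠ b) (h3 : j ≠ a) (h4 : j ≠ b)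
    (u : Finset (Fin n) → ℝ) (hu : ∀ S, u (dEKR_sw i j S) = - u S) (S : Finset (Fin n)) :
    dEKR_D a b u (dEKR_sw i j S) = - dEKR_D a b u S := by
  simp only [dEKR_D]
  rw [← dEKR_sw_comm i j a b h1 h2 h3 h4, hu, hu]; ring

lemma dEKR_sum_zero {n : ℕ} (i j : Fin n) (u : Finset (Fin n) → ℝ)
    (hu : ∀ S, u (dEKR_sw i j S) = - u S) : ∑ T, u T = 0 := by
  have := Equiv.sum_comp (dEKR_sw i j) u
  simp only [hu, Finset.sum_neg_distrib] at this
  linarith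

lemma dEKR_deg_zero {n : ℕ} (i j x : Fin n) (hi : x ≠ i) (hj : x ≠ j) (u : Finset (Fin n) → ℝ)
    (hu : ∀ S, u (dEKR_sw i j S) = - u S) : ∑ T, (if x ∈ T then u T else 0) = 0 := by
  apply dEKR_sum_zero i j
  intro S
  simp only [dEKR_mem, Equiv.swap_apply_of_ne_of_ne hi hj, hu]
  split_ifs <;> simp

lemma dEKR_split {n : ℕ} (k : ℕ) (p β : ℝ) (v : Finset (Fin n) → ℝ) (S : Finset (Fin n)) :
    ∑ T, dEKR_K k p β S T * v T = (∑ x ∈ S, ∑ T, (if x ∈ T then v T else 0)) - k * ∑ T, v T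
      + p * v S + β * ∑ T, (if Disjoint T S then v T else 0) := by
  rw [Finset.sum_comm, Finset.mul_sum, Finset.mul_sum]
  have hp : p * v S = ∑ T, (if S = T then p else 0) * v T := by
    simp
  rw [hp, ← Finset.sum_sub_distrib, ← Finset.sum_add_distrib, ← Finset.sum_add_distrib]
  apply Finset.sum_congr rfl
  intro T _
  have h1 : ∑ x ∈ S, (if x ∈ T then v T else 0) = (S ∩ T).card * v T := by
    rw [← Finset.sum_filter, Finset.sum_const, Finset.filter_mem_eq_inter]; simp
  have h2 : (S ∩ T).card = 0 ↔ Disjoint T S := by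
    rw [Finset.card_eq_zero, disjoint_comm, Finset.disjoint_iff_inter_eq_empty]
  rw [h1]
  simp only [dEKR_K, h2]
  split_ifs <;> ring

lemma dEKR_const {n : ℕ} (Z S0 : Finset (Fin n)) (f : Finset (Fin n) → ℝ)
    (hf : ∀ a b, a ∉ Z → b ∉ Z → a ≠ b → ∀ S, f (dEKR_sw a b S) = f S) :
    ∀ (m : ℕ) (S : Finset (Fin n)), (S \ S0).card = m → S.card = S0.card →
      (∀ z ∈ Z, z ∈ S ↔ z ∈ S0) → f S = f S0 := by
  intro m
  induction m with
  | zero =>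
    intro S h1 h2 _
    rw [Finset.card_eq_zero, Finset.sdiff_eq_empty_iff_subset] at h1
    rw [Finset.eq_of_subset_of_card_le h1 h2.ge]
  | succ m ih =>
    intro S h1 h2 h3
    obtain ⟨a, ha⟩ : (S \ S0).Nonempty := by rw [← Finset.card_pos]; omega
    have h4 : (S0 \ S).card = (S \ S0).card := Finset.card_sdiff_comm h2.symm
    obtain ⟨b, hb⟩ : (S0 \ S).Nonempty := by rw [← Finset.card_pos]; omega
    rw [Finset.mem_sdiff] at ha hb
    have haZ : a ∉ Z := fun h => ha.2 ((h3 a h).1 ha.1)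
    have hbZ : b ∉ Z := fun h => hb.2 ((h3 b h).2 hb.1)
    have hab : a ≠ b := fun h => ha.2 (h ▸ hb.1)
    rw [← hf a b haZ hbZ hab S]
    apply ih
    · have : dEKR_sw a b S \ S0 = (S \ S0).erase a := by
        ext x
        simp only [Finset.mem_sdiff, Finset.mem_erase, dEKR_mem, Equiv.swap_apply_def]
        split_ifs with h h'
        · subst h; tauto
        · subst h'; tauto
        · tauto
      rw [this, Finset.card_erase_of_mem (by simpa using ha)]; omega
    · rw [dEKR_card, h2]
    · intro z hz
      rw [dEKR_mem, Equiv.swap_apply_of_ne_of_ne]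
      · exact h3 z hz
      · rintro rfl; exact haZ hz
      · rintro rfl; exact hbZ hz

lemma dEKR_pair {n : ℕ} (w : Finset (Fin n) → ℝ) (S : Finset (Fin n)) (hS : w S ≠ 0)
    (i j : Fin n) (X : ∀ T, w T ≠ 0 → ¬ (i ∈ T ↔ j ∈ T)) :
    ∃ c, (c = i ∨ c = j) ∧ c ∉ S ∧ ∀ T, w T ≠ 0 → Disjoint T S → c ∈ T := by
  have x := X S hS
  by_cases h : i ∈ S
  · refine ⟨j, Or.inr rfl, by tauto, fun T t1 t2 => ?_⟩
    have h1 := X T t1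
    have h2 : i ∉ T := fun h' => Finset.disjoint_left.1 t2 h' h
    tauto
  · refine ⟨i, Or.inl rfl, h, fun T t1 t2 => ?_⟩
    have h1 := X T t1
    have h2 : j ∉ T := fun h' => Finset.disjoint_left.1 t2 h' (by tauto)
    tauto

/-- two independent derivatives -/
lemma dEKR_caseA {n k : ℕ} (hk : 2 ≤ k) {p β θ : ℝ} (hβ : 0 ≤ β)
    (h3 : β * ((n - 2 - k).choose (k - 2) : ℕ) ≤ p)
    (w : Finset (Fin n) → ℝ) (hE : dEKR_E k p β θ w) (hw : w ≠ 0)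
    (i j a b : Fin n) (hij : i ≠ j) (hab : a ≠ b)
    (h1 : i ≠ a) (h2 : i ≠ b) (h3' : j ≠ a) (h4 : j ≠ b)
    (A1 : ∀ S, w (dEKR_sw i j S) = - w S) (A2 : ∀ S, w (dEKR_sw a b S) = - w S) : 0 ≤ θ := by
  obtain ⟨S, -, hS⟩ := Finset.exists_max_image (Finset.univ : Finset (Finset (Fin n)))
    (fun S => |w S|) ⟨∅, by simp⟩
  have hwS : w S ≠ 0 := by
    intro h
    apply hw
    funext T
    have := hS T (Finset.mem_univ _)
    simpa [h] using this
  have hSk : S.card = k := by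
    by_contra h; exact hwS (hE.1 S h)
  have X1 : ∀ T, w T ≠ 0 → ¬ (i ∈ T ↔ j ∈ T) := by
    intro T hT h
    have := A1 T
    rw [dEKR_fix i j T h] at this
    apply hT; linarith
  have X2 : ∀ T, w T ≠ 0 → ¬ (a ∈ T ↔ b ∈ T) := by
    intro T hT h
    have := A2 T
    rw [dEKR_fix a b T h] at this
    apply hT; linarith
  have e := hE.2 S hSk
  rw [dEKR_split] at e
  have z1 : ∑ x ∈ S, ∑ T, (if x ∈ T then w T else 0) = 0 := by
    apply Finset.sum_eq_zero
    intro x _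
    by_cases hx : x = i ∨ x = j
    · apply dEKR_deg_zero a b x _ _ w A2
      · rcases hx with rfl | rfl <;> assumption
      · rcases hx with rfl | rfl <;> assumption
    · push Not at hx
      exact dEKR_deg_zero i j x hx.1 hx.2 w A1
  rw [z1, dEKR_sum_zero i j w A1] at e
  set X := ∑ T, (if Disjoint T S then w T else 0) with hX
  have hXb : |X| ≤ ((n - 2 - k).choose (k - 2) : ℕ) * |w S| := by
    obtain ⟨P, hP2, hPS, hPT⟩ : ∃ P : Finset (Fin n), P.card = 2 ∧ Disjoint P S ∧
        ∀ T, w T ≠ 0 → Disjoint T S → P ⊆ T := by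
      obtain ⟨c, hc, hcS, hcT⟩ := dEKR_pair w S hwS i j X1
      obtain ⟨d, hd, hdS, hdT⟩ := dEKR_pair w S hwS a b X2
      have hcd : c ≠ d := by
        rcases hc with rfl | rfl <;> rcases hd with rfl | rfl <;> assumption
      refine ⟨{c, d}, Finset.card_pair hcd, ?_, ?_⟩
      · simp [hcS, hdS]
      · intro T t1 t2 x hx
        simp only [Finset.mem_insert, Finset.mem_singleton] at hx
        rcases hx with rfl | rfl
        · exact hcT T t1 t2
        · exact hdT T t1 t2
    have cnt := dEKR_count k P S hPS (by omega)
    rw [hP2, hSk] at cnt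
    rw [← cnt, ← nsmul_eq_mul, ← Finset.sum_const, Finset.sum_filter]
    refine (Finset.abs_sum_le_sum_abs _ _).trans (Finset.sum_le_sum ?_)
    intro T _
    by_cases hT : Disjoint T S
    · by_cases hT0 : w T = 0
      · simp only [hT, hT0, if_true, abs_zero]
        split_ifs <;> positivity
      · have hTk : T.card = k := by
          by_contra h; exact hT0 (hE.1 T h)
        rw [if_pos hT, if_pos ⟨hTk, hPT T hT0 hT, hT⟩]
        exact hS T (Finset.mem_univ _)
    · simp only [hT, if_false, abs_zero, and_false]
      exact le_rfl
  by_contra hθ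
  push Not at hθ
  have hpos : 0 < |w S| := abs_pos.2 hwS
  have e2 : (p - θ) * w S = - (β * X) := by linarith
  have e3 : |p - θ| * |w S| = β * |X| := by
    rw [← abs_mul, e2, abs_neg, abs_mul, abs_of_nonneg hβ]
  have e4 : p - θ ≤ |p - θ| := le_abs_self _
  have e5 : β * |X| ≤ p * |w S| := by
    calc β * |X| ≤ β * (((n - 2 - k).choose (k - 2) : ℕ) * |w S|) :=
          mul_le_mul_of_nonneg_left hXb hβ
      _ = (β * ((n - 2 - k).choose (k - 2) : ℕ)) * |w S| := by ring
      _ ≤ _ := mul_le_mul_of_nonneg_right h3 hpos.le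
  have e6 : (p - θ) * |w S| ≤ p * |w S| :=
    (mul_le_mul_of_nonneg_right e4 hpos.le).trans (by linarith)
  nlinarith

/-- one derivative, constant -/
lemma dEKR_caseB {n k : ℕ} (hk : 2 ≤ k) {p β θ : ℝ}
    (h2 : ((n - 2).choose (k - 1) : ℕ) + p - β * ((n - 1 - k).choose (k - 1) : ℕ) = 0)
    (u : Finset (Fin n) → ℝ) (hE : dEKR_E k p β θ u) (hu : u ≠ 0)
    (i j : Fin n) (hij : i ≠ j)
    (A : ∀ S, u (dEKR_sw i j S) = - u S)
    (hD : ∀ a b, a ∉ ({i, j} : Finset (Fin n)) → b ∉ ({i, j} : Finset (Fin n)) → a ≠ b →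
      ∀ S, u (dEKR_sw a b S) = u S) : 0 ≤ θ := by
  have X1 : ∀ T, u T ≠ 0 → ¬ (i ∈ T ↔ j ∈ T) := by
    intro T hT h
    have := A T
    rw [dEKR_fix i j T h] at this
    apply hT; linarith
  obtain ⟨S, hS, hiS⟩ : ∃ S, u S ≠ 0 ∧ i ∈ S := by
    obtain ⟨S, hS⟩ := Function.ne_iff.1 hu
    simp only [Pi.zero_apply] at hS
    by_cases h : i ∈ S
    · exact ⟨S, hS, h⟩
    · refine ⟨dEKR_sw i j S, by rw [A]; simpa using hS, ?_⟩
      rw [dEKR_mem, Equiv.swap_apply_left]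
      have := X1 S hS
      tauto
  have hjS : j ∉ S := by have := X1 S hS; tauto
  have hSk : S.card = k := by
    by_contra h; exact hS (hE.1 S h)
  have hc : ∀ T, T.card = k → i ∈ T → j ∉ T → u T = u S := by
    intro T h1 h2 h3
    apply dEKR_const {i, j} S u hD _ T rfl (by rw [h1, hSk])
    intro z hz
    simp only [Finset.mem_insert, Finset.mem_singleton] at hz
    rcases hz with rfl | rfl <;> tauto
  have hc' : ∀ T, T.card = k → j ∈ T → i ∉ T → u T = - u S := by
    intro T h1 h2 h3
    have := hc (dEKR_sw i j T) (by rw [dEKR_card, h1])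
      (by rw [dEKR_mem, Equiv.swap_apply_left]; exact h2)
      (by rw [dEKR_mem, Equiv.swap_apply_right]; exact h3)
    rw [A] at this; linarith
  have e := hE.2 S hSk
  rw [dEKR_split, dEKR_sum_zero i j u A] at e
  have z1 : ∑ x ∈ S, ∑ T, (if x ∈ T then u T else 0) = ((n - 2).choose (k - 1) : ℕ) * u S := by
    rw [Finset.sum_eq_single_of_mem i hiS]
    · have cnt := dEKR_count k {i} {j} (by simpa using hij) (by simp; omega)
      simp only [Finset.card_singleton] at cnt
      rw [show n - 2 = n - 1 - 1 by omega, ← cnt, ← nsmul_eq_mul, ← Finset.sum_const,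
        Finset.sum_filter]
      apply Finset.sum_congr rfl
      intro T _
      simp only [Finset.singleton_subset_iff, Finset.disjoint_singleton_right]
      by_cases t1 : T.card = k
      · by_cases t2 : i ∈ T
        · by_cases t3 : j ∈ T
          · have : u T = 0 := by
              by_contra h; exact X1 T h (by tauto)
            simp [t1, t2, t3, this]
          · simp [t1, t2, t3, hc T t1 t2 t3]
        · simp [t2]
      · simp [t1, hE.1 T t1]
    · intro x hx hxi
      exact dEKR_deg_zero i j x hxi (by rintro rfl; exact hjS hx) u A
  have z2 : ∑ T, (if Disjoint T S then u T else 0)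
      = ((n - 1 - k).choose (k - 1) : ℕ) * (- u S) := by
    have cnt := dEKR_count k {j} S (by simpa using hjS) (by simp; omega)
    rw [Finset.card_singleton, hSk] at cnt
    rw [← cnt, ← nsmul_eq_mul, ← Finset.sum_const, Finset.sum_filter]
    apply Finset.sum_congr rfl
    intro T _
    simp only [Finset.singleton_subset_iff]
    by_cases t0 : Disjoint T S
    · have t2 : i ∉ T := fun h => Finset.disjoint_left.1 t0 h hiS
      by_cases t1 : T.card = k
      · by_cases t3 : j ∈ T
        · simp [t0, t1, t3, hc' T t1 t3 t2]
        · have : u T = 0 := by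
            by_contra h; exact X1 T h (by tauto)
          simp [t3, this]
      · simp [t1, hE.1 T t1]
    · simp [t0]
  rw [z1, z2] at e
  have : θ * u S = 0 := by
    rw [← e]
    linear_combination (u S) * h2
  rcases mul_eq_zero.1 this with h | h
  · exact h.ge
  · exact absurd h hS

lemma dEKR_caseC {n k : ℕ} (hk : 2 ≤ k) {p β θ : ℝ}
    (h1 : (k : ℝ) * ((n - 1).choose (k - 1) : ℕ) - k * (n.choose k : ℕ) + p
      + β * ((n - k).choose k : ℕ) = 0)
    (v : Finset (Fin n) → ℝ) (hE : dEKR_E k p β θ v) (hv : v ≠ 0)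
    (hD : ∀ a b, a ≠ b → ∀ S, v (dEKR_sw a b S) = v S) : 0 ≤ θ := by
  obtain ⟨S, hS⟩ := Function.ne_iff.1 hv
  simp only [Pi.zero_apply] at hS
  have hSk : S.card = k := by
    by_contra h; exact hS (hE.1 S h)
  have hc : ∀ T, T.card = k → v T = v S := by
    intro T h1
    apply dEKR_const ∅ S v (fun a b _ _ h => hD a b h) _ T rfl (by rw [h1, hSk])
    simp
  have e := hE.2 S hSk
  rw [dEKR_split] at e
  have gen : ∀ P Q : Finset (Fin n), Disjoint P Q → P.card ≤ k →
      ∑ T, (if P ⊆ T ∧ Disjoint T Q then v T else 0)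
        = ((n - P.card - Q.card).choose (k - P.card) : ℕ) * v S := by
    intro P Q hPQ hP
    rw [← dEKR_count k P Q hPQ hP, ← nsmul_eq_mul, ← Finset.sum_const, Finset.sum_filter]
    apply Finset.sum_congr rfl
    intro T _
    by_cases t1 : T.card = k
    · simp [t1, hc T t1]
    · simp [t1, hE.1 T t1]
  have z1 : ∑ x ∈ S, ∑ T, (if x ∈ T then v T else 0)
      = k * (((n - 1).choose (k - 1) : ℕ) * v S) := by
    rw [← hSk, ← nsmul_eq_mul, ← Finset.sum_const]
    apply Finset.sum_congr rfl
    intro x _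
    have := gen {x} ∅ (by simp) (by simp; omega)
    simpa [hSk] using this
  have z2 : ∑ T, v T = (n.choose k : ℕ) * v S := by
    simpa using gen ∅ ∅ (by simp) (by simp)
  have z3 : ∑ T, (if Disjoint T S then v T else 0) = ((n - k).choose k : ℕ) * v S := by
    simpa [hSk] using gen ∅ S (by simp) (by simp)
  rw [z1, z2, z3] at e
  have : θ * v S = 0 := by
    rw [← e]
    linear_combination (v S) * h1
  rcases mul_eq_zero.1 this with h | h
  · exact h.ge
  · exact absurd h hS

lemma dEKR_eig {n k : ℕ} (hk : 2 ≤ k) {p β θ : ℝ} (hβ : 0 ≤ β)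
    (h1 : (k : ℝ) * ((n - 1).choose (k - 1) : ℕ) - k * (n.choose k : ℕ) + p
      + β * ((n - k).choose k : ℕ) = 0)
    (h2 : ((n - 2).choose (k - 1) : ℕ) + p - β * ((n - 1 - k).choose (k - 1) : ℕ) = 0)
    (h3 : β * ((n - 2 - k).choose (k - 2) : ℕ) ≤ p)
    (v : Finset (Fin n) → ℝ) (hE : dEKR_E k p β θ v) (hv : v ≠ 0) : 0 ≤ θ := by
  by_cases hB : ∃ i j, i ≠ j ∧ dEKR_D i j v ≠ 0
  · obtain ⟨i, j, hij, hu⟩ := hB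
    have hEu := dEKR_E_D i j hE
    have hA := dEKR_D_anti i j v
    set u := dEKR_D i j v with hu'
    by_cases hA' : ∃ a b, a ∉ ({i, j} : Finset (Fin n)) ∧ b ∉ ({i, j} : Finset (Fin n)) ∧ a ≠ b ∧
        dEKR_D a b u ≠ 0
    · obtain ⟨a, b, ha, hb, hab, hw⟩ := hA'
      simp only [Finset.mem_insert, Finset.mem_singleton, not_or] at ha hb
      exact dEKR_caseA hk hβ h3 (dEKR_D a b u) (dEKR_E_D a b hEu) hw i j a b hij hab
        (Ne.symm ha.1) (Ne.symm hb.1) (Ne.symm ha.2) (Ne.symm hb.2)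
        (dEKR_D_anti2 i j a b (Ne.symm ha.1) (Ne.symm hb.1) (Ne.symm ha.2) (Ne.symm hb.2) u hA)
        (dEKR_D_anti a b u)
    · push Not at hA'
      apply dEKR_caseB hk h2 u hEu hu i j hij hA
      intro a b ha hb hab S
      have := congrFun (hA' a b ha hb hab) S
      simp only [dEKR_D, Pi.zero_apply] at this
      linarith
  · push Not at hB
    apply dEKR_caseC hk h1 v hE hv
    intro a b hab S
    have := congrFun (hB a b hab) S
    simp only [dEKR_D, Pi.zero_apply] at this
    linarith

/-- the kernel is positive semidefinite on functions on `k`-sets -/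
lemma dEKR_psd {n k : ℕ} (hk : 2 ≤ k) {p β : ℝ} (hβ : 0 ≤ β)
    (h1 : (k : ℝ) * ((n - 1).choose (k - 1) : ℕ) - k * (n.choose k : ℕ) + p
      + β * ((n - k).choose k : ℕ) = 0)
    (h2 : ((n - 2).choose (k - 1) : ℕ) + p - β * ((n - 1 - k).choose (k - 1) : ℕ) = 0)
    (h3 : β * ((n - 2 - k).choose (k - 2) : ℕ) ≤ p)
    (f : Finset (Fin n) → ℝ) (hf : ∀ S, S.card ≠ k → f S = 0) :
    0 ≤ ∑ S, f S * ∑ T, dEKR_K k p β S T * f T := by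
  classical
  let M : Matrix (Finset (Fin n)) (Finset (Fin n)) ℝ :=
    fun S T => if S.card = k ∧ T.card = k then dEKR_K k p β S T else 0
  have hM : M.IsHermitian := by
    ext S T
    rw [Matrix.conjTranspose_apply, star_trivial]
    simp only [M]
    rw [dEKR_K_symm k p β S T]
    simp only [and_comm]
  have key : ∀ g : Finset (Fin n) → ℝ, (∀ S, S.card ≠ k → g S = 0) → ∀ S,
      (M.mulVec g) S = if S.card = k then ∑ T, dEKR_K k p β S T * g T else 0 := by
    intro g hg S
    simp only [Matrix.mulVec, dotProduct, M]
    split_ifs with h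
    · apply Finset.sum_congr rfl
      intro T _
      by_cases t : T.card = k
      · simp [h, t]
      · simp [hg T t]
    · simp [h]
  have hpsd : M.PosSemidef := by
    rw [hM.posSemidef_iff_eigenvalues_nonneg]
    intro r
    simp only [Pi.zero_apply]
    by_contra hneg
    push Not at hneg
    have he := hM.mulVec_eigenvectorBasis r
    set θ := hM.eigenvalues r
    have hv : (⇑(hM.eigenvectorBasis r) : Finset (Fin n) → ℝ) ≠ 0 := by
      intro h
      have := hM.eigenvectorBasis.orthonormal.ne_zero r
      apply this
      ext S
      exact congrFun h S
    set v : Finset (Fin n) → ℝ := ⇑(hM.eigenvectorBasis r)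
    have hsupp : ∀ S, S.card ≠ k → v S = 0 := by
      intro S hS
      have := congrFun he S
      simp only [Matrix.mulVec, dotProduct, M, hS, false_and, if_false, zero_mul,
        Finset.sum_const_zero, Pi.smul_apply, smul_eq_mul] at this
      rcases mul_eq_zero.1 this.symm with h | h
      · exact absurd h hneg.ne
      · exact h
    have : 0 ≤ θ := by
      apply dEKR_eig hk hβ h1 h2 h3 v ⟨hsupp, ?_⟩ hv
      intro S hS
      have := congrFun he S
      rw [key v hsupp, if_pos hS] at this
      simpa using this
    linarith
  have := hpsd.dotProduct_mulVec_nonneg f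
  simp only [star_trivial, dotProduct] at this
  refine this.trans_eq (Finset.sum_congr rfl ?_)
  intro S _
  rw [key f hf]
  split_ifs with h
  · rfl
  · simp [hf S h]

/-- Degree version of the Erdős–Ko–Rado theorem (Theorem 4, first part):
if `n ≥ 2k + 2` and `F` is an intersecting family of `k`-subsets of `[n]`,
then the minimum degree of `F` is at most `C(n-2, k-2)`. -/
theorem degree_EKR (n k : ℕ) (hk : 0 < k) (hn : 2 * k + 2 ≤ n)
    (F : Finset (Finset (Fin n)))
    (hcard : ∀ A ∈ F, A.card = k)
    (hint : ∀ A ∈ F, ∀ B ∈ F, (A ∩ B).Nonempty) :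
    ∃ i : Fin n, (F.filter (fun A => i ∈ A)).card ≤ (n - 2).choose (k - 2) := by
  by_cases hk1 : k = 1
  · subst hk1
    refine ⟨⟨0, by omega⟩, ?_⟩
    simp only [Nat.reduceSubDiff, Nat.choose_zero_right]
    rw [Finset.card_le_one]
    intro A hA B hB
    simp only [Finset.mem_filter] at hA hB
    have a1 := hcard A hA.1
    have b1 := hcard B hB.1
    rw [Finset.card_eq_one] at a1 b1
    obtain ⟨a, rfl⟩ := a1
    obtain ⟨b, rfl⟩ := b1
    have h1 := hA.2
    have h2 := hB.2
    simp only [Finset.mem_singleton] at h1 h2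
    rw [← h1, ← h2]
  have hk2 : 2 ≤ k := by omega
  by_contra hcon
  push Not at hcon
  obtain ⟨m, rfl⟩ : ∃ m, k = m + 2 := ⟨k - 2, by omega⟩
  obtain ⟨r, rfl⟩ : ∃ r, n = (m + 2) + (r + 2) := ⟨n - (m + 4), by omega⟩
  have hr : m + 2 ≤ r := by omega
  set C : ℕ := (m + 2 + (r + 2) - 2).choose (m + 2 - 2) with hC
  set G : ℕ := (m + 2 + (r + 2) - 2).choose (m + 2 - 1) with hG
  set p : ℝ := ((r : ℝ) + 2) * C with hp
  set N : ℕ := (r + 2).choose (m + 2) with hN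
  have hNpos : (0 : ℝ) < N := by
    have : 0 < N := Nat.choose_pos (by omega)
    exact_mod_cast this
  set β : ℝ := ((r : ℝ) + 2) * G / N with hβ
  have hβ0 : 0 ≤ β := by positivity
  have bN : β * N = (r + 2) * G := by rw [hβ]; field_simp
  -- binomial identities
  have i1 : ((r : ℝ) + 2) * ((r + 1).choose (m + 1) : ℕ) = N * (m + 2) := by
    have := Nat.add_one_mul_choose_eq (r + 1) (m + 1)
    exact_mod_cast this
  have i2 : ((r : ℝ) + 1) * (r.choose m : ℕ) = ((r + 1).choose (m + 1) : ℕ) * (m + 1) := by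
    have := Nat.add_one_mul_choose_eq r m
    exact_mod_cast this
  have i3 : (G : ℝ) * (m + 1) = C * (r + 2) := by
    have := Nat.choose_succ_right_eq (m + 2 + r) m
    rw [show m + 2 + r - m = r + 2 by omega] at this
    exact_mod_cast this
  have i4 : ((m : ℝ) + 2 + (r + 2)) * ((m + r + 3).choose (m + 1) : ℕ)
      = ((m + 2 + (r + 2)).choose (m + 2) : ℕ) * (m + 2) := by
    have := Nat.add_one_mul_choose_eq (m + r + 3) (m + 1)
    rw [show m + r + 3 + 1 = m + 2 + (r + 2) by ring] at this
    exact_mod_cast this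
  have i5 : (((m + r + 3).choose (m + 1) : ℕ) : ℝ) = C + G := by
    have : (m + r + 3).choose (m + 1) = C + G := by
      rw [show m + r + 3 = (m + 2 + (r + 2) - 2) + 1 by omega, Nat.choose_succ_succ]
      rfl
    exact_mod_cast this
  have b1 : β * ((r + 1).choose (m + 1) : ℕ) = (m + 2) * G := by
    have h : ((r : ℝ) + 2) ≠ 0 := by positivity
    apply mul_left_cancel₀ h
    linear_combination β * i1 + (m + 2) * bN
  have hrm : (m : ℝ) + 2 ≤ r := by exact_mod_cast hr
  have b2 : β * (r.choose m : ℕ) ≤ p := by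
    have h : (0 : ℝ) < (r : ℝ) + 1 := by positivity
    apply le_of_mul_le_mul_left _ h
    have e1 : ((r : ℝ) + 1) * (β * (r.choose m : ℕ)) = (m + 2) * (m + 1) * G := by
      linear_combination β * i2 + (m + 1) * b1
    have e2 : ((r : ℝ) + 1) * p = (r + 1) * (m + 1) * G := by
      rw [hp]; linear_combination -(r + 1 : ℝ) * i3
    rw [e1, e2]
    have h0 : (0 : ℝ) ≤ (m + 1) * G := by positivity
    nlinarith
  let f : Finset (Fin (m + 2 + (r + 2))) → ℝ := fun S => if S ∈ F then 1 else 0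
  have hf : ∀ S, S.card ≠ m + 2 → f S = 0 := by
    intro S hS
    have : S ∉ F := fun h => hS (hcard S h)
    simp [f, this]
  have main := dEKR_psd (n := m + 2 + (r + 2)) hk2 hβ0 (p := p) ?_ ?_ ?_ f hf
  rotate_left
  · rw [show m + 2 + (r + 2) - 1 = m + r + 3 by omega, show m + 2 - 1 = m + 1 by omega,
      show m + 2 + (r + 2) - (m + 2) = r + 2 by omega]
    push_cast
    rw [hp]
    linear_combination i4 + bN - (r + 2 : ℝ) * i5
  · rw [show m + 2 + (r + 2) - 1 - (m + 2) = r + 1 by omega]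
    have : m + 2 - 1 = m + 1 := by omega
    rw [← hG, this, b1, hp]
    linear_combination -i3
  · rw [show m + 2 + (r + 2) - 2 - (m + 2) = r by omega, show m + 2 - 2 = m by omega]
    exact b2
  let d : Fin (m + 2 + (r + 2)) → ℝ := fun x => ((F.filter (fun A => x ∈ A)).card : ℝ)
  have hd : ∀ x, ∑ T, (if x ∈ T then f T else 0) = d x := by
    intro x
    simp only [d, f, Finset.card_filter]
    push_cast
    rw [← Finset.univ_inter F, ← Finset.sum_ite_mem Finset.univ F]
    apply Finset.sum_congr rfl
    intro T _
    simp only [Finset.univ_inter]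
    split_ifs <;> rfl
  have hX : ∑ T, f T = (F.card : ℝ) := by
    simp [f]
  have hsum : ∀ g : Finset (Fin (m + 2 + (r + 2))) → ℝ, ∑ S, f S * g S = ∑ S ∈ F, g S := by
    intro g
    simp [f]
  have hdd : ∀ g : Fin (m + 2 + (r + 2)) → ℝ, ∑ S ∈ F, ∑ x ∈ S, g x = ∑ x, g x * d x := by
    intro g
    have : ∀ S ∈ F, ∑ x ∈ S, g x = ∑ x, (if x ∈ S then g x else 0) := by
      intro S _
      simp
    rw [Finset.sum_congr rfl this, Finset.sum_comm]
    apply Finset.sum_congr rfl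
    intro x _
    rw [← Finset.sum_filter, Finset.sum_const, nsmul_eq_mul, mul_comm]
  have hdsum : ∑ x, d x = (m + 2) * (F.card : ℝ) := by
    have := hdd (fun _ => 1)
    simp only [one_mul] at this
    rw [← this]
    have h2 : ∀ S ∈ F, ∑ x ∈ S, (1 : ℝ) = m + 2 := by
      intro S hS
      simp [hcard S hS]
    rw [Finset.sum_congr rfl h2, Finset.sum_const, nsmul_eq_mul, mul_comm]
  rw [hsum] at main
  have hval : ∀ S ∈ F, ∑ T, dEKR_K (m + 2) p β S T * f T
      = ∑ x ∈ S, d x + (p - (m + 2) * (F.card : ℝ)) := by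
    intro S hS
    rw [dEKR_split, hX]
    have z : ∑ T, (if Disjoint T S then f T else 0) = 0 := by
      apply Finset.sum_eq_zero
      intro T _
      split_ifs with h
      · have : T ∉ F := by
          intro hT
          have := hint T hT S hS
          rw [Finset.disjoint_iff_inter_eq_empty] at h
          simp [h] at this
        simp [f, this]
      · rfl
    rw [z]
    simp only [hd]
    have : f S = 1 := by simp [f, hS]
    rw [this]
    push_cast
    ring
  rw [Finset.sum_congr rfl hval, Finset.sum_add_distrib, hdd, Finset.sum_const,
    nsmul_eq_mul] at main
  have hub : 0 ≤ ∑ x, (d x - (C + 1)) * ((F.card : ℝ) - d x) := by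
    apply Finset.sum_nonneg
    intro x _
    apply mul_nonneg
    · have h : C + 1 ≤ (F.filter (fun A => x ∈ A)).card := hcon x
      have h' : (C : ℝ) + 1 ≤ d x := by
        simp only [d]; exact_mod_cast h
      linarith
    · have h : (F.filter (fun A => x ∈ A)).card ≤ F.card := Finset.card_filter_le _ _
      have h' : d x ≤ F.card := by
        simp only [d]; exact_mod_cast h
      linarith
  have hexp : ∑ x, (d x - (C + 1)) * ((F.card : ℝ) - d x)
      = ((F.card : ℝ) + C + 1) * ((m + 2) * F.card) - ∑ x, d x * d x
        - (m + 2 + (r + 2)) * ((C + 1) * F.card) := by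
    have : ∀ x, (d x - (C + 1)) * ((F.card : ℝ) - d x)
        = ((F.card : ℝ) + C + 1) * d x - d x * d x - (C + 1) * F.card := by
      intro x; ring
    simp only [this, Finset.sum_sub_distrib, ← Finset.mul_sum, hdsum, Finset.sum_const]
    simp
    ring
  rw [hexp] at hub
  have hFpos : (0 : ℝ) < F.card := by
    have h1 := hcon ⟨0, by omega⟩
    have h2 : (F.filter (fun A => (⟨0, by omega⟩ : Fin (m + 2 + (r + 2))) ∈ A)).card ≤ F.card :=
      Finset.card_filter_le _ _
    have : 0 < F.card := by omega
    exact_mod_cast this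
  have hfin : ((r : ℝ) + 2) * F.card ≤ 0 := by
    rw [hp] at main
    linarith
  have : 0 < ((r : ℝ) + 2) * F.card := by positivity
  linarith
end

section
/- Let n, k, t be positive integers with 1 ≤ t < k and n ≥ 2k + 3t/(1 - t/k). Then any intersecting family F of k-element subsets of [n] satisfies δ_t(F) ≤ C(n-t-1, k-t-1). -/
open Finset
set_option linter.unusedSectionVars false

section HarmonicSlices

variable {α : Type*} [Fintype α] [DecidableEq α]

/-- Sum of `g` over the `j`-subsets of `S`. -/
def upSum (g : Finset α → ℝ) (j : ℕ) (S : Finset α) : ℝ := ∑ J ∈ powersetCard j S, g J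

/-- `g` is harmonic on level `j`. -/
def Harmonic (j : ℕ) (g : Finset α → ℝ) : Prop :=
  ∀ I : Finset α, I.card + 1 = j → ∑ x ∈ Iᶜ, g (insert x I) = 0

theorem sum_insert_reindex (U : Finset α) (i : ℕ) (φ : Finset α → α → ℝ) :
    ∑ I ∈ powersetCard i U, ∑ x ∈ U \ I, φ (insert x I) x
      = ∑ J ∈ powersetCard (i + 1) U, ∑ x ∈ J, φ J x := by
  rw [Finset.sum_sigma', Finset.sum_sigma']
  refine Finset.sum_bij' (fun p _ => ⟨insert p.2 p.1, p.2⟩) (fun p _ => ⟨p.1.erase p.2, p.2⟩)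
    ?_ ?_ ?_ ?_ ?_
  · rintro ⟨I, x⟩ h
    simp only [mem_sigma, mem_powersetCard, mem_sdiff] at h ⊢
    obtain ⟨⟨h1, h2⟩, h3, h4⟩ := h
    refine ⟨⟨insert_subset h3 h1, ?_⟩, mem_insert_self _ _⟩
    rw [card_insert_of_notMem h4, h2]
  · rintro ⟨J, x⟩ h
    simp only [mem_sigma, mem_powersetCard, mem_sdiff] at h ⊢
    obtain ⟨⟨h1, h2⟩, h3⟩ := h
    refine ⟨⟨(erase_subset _ _).trans h1, ?_⟩, h1 h3, notMem_erase _ _⟩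
    rw [card_erase_of_mem h3, h2]; simp
  · rintro ⟨I, x⟩ h
    simp only [mem_sigma, mem_sdiff] at h
    simp [erase_insert h.2.2]
  · rintro ⟨J, x⟩ h
    simp only [mem_sigma] at h
    simp [insert_erase h.2]
  · rintro ⟨I, x⟩ h
    rfl

theorem upSum_self (g : Finset α → ℝ) (S : Finset α) : upSum g S.card S = g S := by
  simp [upSum]

theorem upSum_lt (g : Finset α → ℝ) {j : ℕ} {S : Finset α} (h : S.card < j) : upSum g j S = 0 := by
  simp [upSum, powersetCard_eq_empty.2 h]

/-- adding a point on average -/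
theorem sum_upSum_insert {j : ℕ} {g : Finset α → ℝ} (hg : Harmonic j g) (T : Finset α) :
    ∑ y ∈ Tᶜ, upSum g j (insert y T)
      = ((Fintype.card α : ℝ) - T.card - j) * upSum g j T := by
  rcases j with _ | i
  · simp only [upSum, powersetCard_zero, sum_singleton, sum_const, nsmul_eq_mul, card_compl]
    rw [Nat.cast_sub (card_le_univ T)]; simp
  · have h1 : ∀ y ∈ Tᶜ, upSum g (i+1) (insert y T)
        = upSum g (i+1) T + ∑ I ∈ powersetCard i T, g (insert y I) := by
      intro y hy
      have hy' : y ∉ T := by simpa using hy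
      unfold upSum
      rw [powersetCard_succ_insert hy', sum_union, sum_image]
      · intro A hA B hB hAB
        have hA' : y ∉ A := fun h => hy' ((mem_powersetCard.1 hA).1 h)
        have hB' : y ∉ B := fun h => hy' ((mem_powersetCard.1 hB).1 h)
        rw [← erase_insert hA', ← erase_insert hB', hAB]
      · rw [disjoint_left]
        intro A hA hB
        obtain ⟨B, _, rfl⟩ := mem_image.1 hB
        exact hy' ((mem_powersetCard.1 hA).1 (mem_insert_self _ _))
    rw [sum_congr rfl h1, sum_add_distrib, sum_comm]
    have h2 : ∀ I ∈ powersetCard i T, ∑ y ∈ Tᶜ, g (insert y I)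
        = - ∑ y ∈ T \ I, g (insert y I) := by
      intro I hI
      obtain ⟨hI1, hI2⟩ := mem_powersetCard.1 hI
      have h3 := hg I (by omega)
      have h4 : Iᶜ = Tᶜ ∪ (T \ I) := by
        ext x; simp only [mem_compl, mem_union, mem_sdiff]
        have := @hI1 x
        tauto
      rw [h4, sum_union] at h3
      · linarith
      · rw [disjoint_left]; intro x hx hx'
        simp only [mem_compl, mem_sdiff] at hx hx'
        exact hx hx'.1
    rw [sum_congr rfl h2, sum_neg_distrib, sum_insert_reindex T i (fun J _ => g J)]
    have h5 : ∀ J ∈ powersetCard (i+1) T, ∑ x ∈ J, g J = ((i:ℝ)+1) * g J := by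
      intro J hJ
      simp [(mem_powersetCard.1 hJ).2]
    rw [sum_congr rfl h5, ← mul_sum]
    simp only [sum_const, nsmul_eq_mul, card_compl]
    rw [Nat.cast_sub (card_le_univ T)]
    unfold upSum
    push_cast
    ring

/-- removing a point on average -/
theorem sum_upSum_erase (j : ℕ) (g : Finset α → ℝ) (S : Finset α) :
    ∑ x ∈ S, upSum g j (S.erase x) = ((S.card : ℝ) - j) * upSum g j S := by
  have h1 : ∀ x ∈ S, upSum g j (S.erase x)
      = ∑ J ∈ powersetCard j S, if x ∈ S \ J then g J else 0 := by
    intro x hx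
    unfold upSum
    rw [← sum_filter]
    apply sum_congr _ (fun _ _ => rfl)
    ext J
    simp only [mem_powersetCard, mem_filter, mem_sdiff, subset_erase]
    tauto
  rw [sum_congr rfl h1, sum_comm]
  unfold upSum
  rw [mul_sum]
  apply sum_congr rfl
  intro J hJ
  obtain ⟨hJ1, hJ2⟩ := mem_powersetCard.1 hJ
  rw [← sum_filter]
  have : S.filter (fun x => x ∈ S \ J) = S \ J := by
    ext x; simp
  rw [this, sum_const, nsmul_eq_mul, card_sdiff_of_subset hJ1, Nat.cast_sub (card_le_card hJ1), hJ2]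

/-- Sum over `k`-sets above `T`. -/
def downSum (f : Finset α → ℝ) (k : ℕ) (T : Finset α) : ℝ :=
  ∑ S ∈ (powersetCard k univ).filter (fun S => T ⊆ S), f S

theorem downSum_step (f : Finset α → ℝ) (k : ℕ) (T : Finset α) :
    ∑ y ∈ Tᶜ, downSum f k (insert y T) = ((k : ℝ) - T.card) * downSum f k T := by
  unfold downSum
  have h1 : ∀ y ∈ Tᶜ, ∑ S ∈ (powersetCard k univ).filter (fun S => insert y T ⊆ S), f S
      = ∑ S ∈ (powersetCard k univ).filter (fun S => T ⊆ S), if y ∈ S then f S else 0 := by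
    intro y _
    rw [← sum_filter, filter_filter]
    apply sum_congr _ (fun _ _ => rfl)
    ext S
    simp only [mem_filter, insert_subset_iff]
    tauto
  rw [sum_congr rfl h1, sum_comm, mul_sum]
  apply sum_congr rfl
  intro S hS
  obtain ⟨hS1, hS2⟩ := mem_filter.1 hS
  rw [← sum_filter]
  have : Tᶜ.filter (fun x => x ∈ S) = S \ T := by
    ext x; simp [and_comm]
  rw [this, sum_const, nsmul_eq_mul, card_sdiff_of_subset hS2, Nat.cast_sub (card_le_card hS2),
    (mem_powersetCard.1 hS1).2]

theorem downSum_self (f : Finset α → ℝ) (T : Finset α) : downSum f T.card T = f T := by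
  unfold downSum
  have : (powersetCard T.card univ).filter (fun S => T ⊆ S) = {T} := by
    ext S
    simp only [mem_filter, mem_powersetCard, mem_singleton, subset_univ, true_and]
    constructor
    · rintro ⟨h1, h2⟩
      exact (eq_of_subset_of_card_le h2 h1.le).symm
    · rintro rfl; exact ⟨rfl, Subset.refl _⟩
  rw [this, sum_singleton]

theorem downSum_upSum {j k : ℕ} {g : Finset α → ℝ} (hg : Harmonic j g)
    (hjk : j + k ≤ Fintype.card α) : ∀ (d : ℕ) (T : Finset α), T.card + d = k →
    downSum (upSum g j) k T = ((Fintype.card α - T.card - j).choose d : ℝ) * upSum g j T := by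
  intro d
  induction d with
  | zero =>
    intro T hT
    have : k = T.card := by omega
    subst this
    rw [downSum_self]; simp
  | succ d ih =>
    intro T hT
    have h1 := downSum_step (upSum g j) k T
    have h2 : ∀ y ∈ Tᶜ, downSum (upSum g j) k (insert y T)
        = ((Fintype.card α - T.card - j - 1).choose d : ℝ) * upSum g j (insert y T) := by
      intro y hy
      have hy' : y ∉ T := by simpa using hy
      have hc := card_insert_of_notMem hy'
      rw [ih (insert y T) (by omega), hc]
      congr 3
      omega
    rw [sum_congr rfl h2, ← mul_sum, sum_upSum_insert hg] at h1
    obtain ⟨m, hm⟩ : ∃ m, Fintype.card α - T.card - j = m + 1 :=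
      ⟨Fintype.card α - T.card - j - 1, by omega⟩
    have hm' : (Fintype.card α : ℝ) - T.card - j = m + 1 := by
      have : Fintype.card α = m + 1 + T.card + j := by omega
      rw [this]; push_cast; ring
    rw [hm]
    rw [hm, hm', Nat.add_sub_cancel] at h1
    have hk : (k:ℝ) - T.card = d + 1 := by rw [← hT]; push_cast; ring
    rw [hk] at h1
    have h3 : ((m:ℝ)+1) * (m.choose d) = ((m+1).choose (d+1) : ℝ) * (d+1) := by
      exact_mod_cast Nat.add_one_mul_choose_eq m d
    have h4 : ((d:ℝ)+1) ≠ 0 := by positivity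
    apply mul_left_cancel₀ h4
    rw [← h1]

    linear_combination (upSum g j T) * h3

theorem upSum_orthogonal {i j k : ℕ} {g g' : Finset α → ℝ} (hg : Harmonic i g)
    (hg' : Harmonic j g') (hij : i < j) (hjk : j ≤ k) (hk : 2 * k ≤ Fintype.card α) :
    ∑ S ∈ powersetCard k univ, upSum g i S * upSum g' j S = 0 := by
  have gen : ∀ (l m : ℕ) (φ ψ : Finset α → ℝ),
      ∑ S ∈ powersetCard l univ, φ S * upSum ψ m S
        = ∑ J ∈ powersetCard m univ, ψ J * downSum φ l J := by
    intro l m φ ψ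
    have h1 : ∀ S : Finset α, upSum ψ m S
        = ∑ J ∈ powersetCard m univ, if J ⊆ S then ψ J else 0 := by
      intro S
      unfold upSum
      rw [← sum_filter]
      apply sum_congr _ (fun _ _ => rfl)
      ext J; simp [mem_powersetCard, and_comm]
    simp_rw [h1, mul_sum]
    rw [sum_comm]
    apply sum_congr rfl
    intro J _
    unfold downSum
    rw [mul_sum, sum_filter]
    apply sum_congr rfl
    intro S _
    split_ifs <;> ring
  rw [gen]
  have h2 : ∀ J ∈ powersetCard j (univ : Finset α), g' J * downSum (upSum g i) k J
      = ((Fintype.card α - j - i).choose (k - j) : ℝ) * (upSum g' j J * upSum g i J) := by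
    intro J hJ
    have hJc := (mem_powersetCard.1 hJ).2
    rw [downSum_upSum hg (by omega) (k - j) J (by omega), hJc]
    have := upSum_self g' J
    rw [hJc] at this
    rw [this]; ring
  rw [sum_congr rfl h2, ← mul_sum, gen]
  rw [sum_eq_zero, mul_zero]
  intro I hI
  have hIc := (mem_powersetCard.1 hI).2
  rw [downSum_upSum hg' (by omega) (j - i) I (by omega), upSum_lt g' (by omega)]
  simp

/-- The level sums of a harmonic function with respect to a set. -/
def levelSum (g : Finset α → ℝ) (j : ℕ) (S : Finset α) (m : ℕ) : ℝ :=
  ∑ J ∈ powersetCard j univ, if (J ∩ S).card = m then g J else 0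

theorem levelSum_step {i : ℕ} {g : Finset α → ℝ} (hg : Harmonic (i+1) g) (S : Finset α)
    (m : ℕ) :
    ((m:ℝ)+1) * levelSum g (i+1) S (m+1) + ((i:ℝ) + 1 - m) * levelSum g (i+1) S m = 0 := by
  have h := sum_insert_reindex (univ : Finset α) i
    (fun J x => if ((J.erase x) ∩ S).card = m then g J else 0)
  have hl : ∑ I ∈ powersetCard i (univ : Finset α), ∑ x ∈ univ \ I,
      (if (((insert x I).erase x) ∩ S).card = m then g (insert x I) else 0) = 0 := by
    apply sum_eq_zero
    intro I hI
    have hh := hg I (by rw [(mem_powersetCard.1 hI).2])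
    rw [← compl_eq_univ_sdiff]
    by_cases hm : (I ∩ S).card = m
    · rw [← hh]
      apply sum_congr rfl
      intro x hx
      rw [erase_insert (by simpa using hx), if_pos hm]
    · apply sum_eq_zero
      intro x hx
      rw [erase_insert (by simpa using hx), if_neg hm]
  rw [hl] at h
  rw [h]
  unfold levelSum
  rw [mul_sum, mul_sum, ← sum_add_distrib]
  apply sum_congr rfl
  intro J hJ
  have hJc := (mem_powersetCard.1 hJ).2
  have hsplit : ∑ x ∈ J, (if ((J.erase x) ∩ S).card = m then g J else 0)
      = ∑ x ∈ J ∩ S, (if (J ∩ S).card = m + 1 then g J else 0)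
        + ∑ x ∈ J \ S, (if (J ∩ S).card = m then g J else 0) := by
    rw [← sum_inter_add_sum_sdiff J S]
    congr 1
    · apply sum_congr rfl
      intro x hx
      rw [erase_inter, card_erase_of_mem hx]
      have : 0 < (J ∩ S).card := card_pos.2 ⟨x, hx⟩
      have e : ((J ∩ S).card - 1 = m) ↔ ((J ∩ S).card = m + 1) := by omega
      simp only [e]
    · apply sum_congr rfl
      intro x hx
      have hx' : x ∉ J ∩ S := fun h => (mem_sdiff.1 hx).2 (mem_inter.1 h).2
      rw [erase_inter, erase_eq_of_notMem hx']
  rw [hsplit, sum_const, sum_const, nsmul_eq_mul, nsmul_eq_mul]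
  have hc : ((J \ S).card : ℝ) = i + 1 - (J ∩ S).card := by
    have := card_sdiff_add_card_inter J S
    rw [hJc] at this
    have h' : ((J \ S).card : ℝ) + (J ∩ S).card = i + 1 := by exact_mod_cast this
    linarith
  rw [hc]
  split_ifs with h1 h2 h2
  · omega
  · rw [h1]; push_cast; ring
  · rw [h2]; ring
  · ring

theorem levelSum_eq {j : ℕ} {g : Finset α → ℝ} (hg : Harmonic j g) (S : Finset α) :
    ∀ m, m ≤ j → levelSum g j S m = (-1) ^ m * (j.choose m : ℝ) * levelSum g j S 0 := by
  intro m
  induction m with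
  | zero => intro _; simp
  | succ m ih =>
    intro hm
    obtain ⟨i, rfl⟩ : ∃ i, j = i + 1 := ⟨j - 1, by omega⟩
    have h1 := levelSum_step hg S m
    rw [ih (by omega)] at h1
    have h2 : ((i+1).choose (m+1) : ℝ) * (m+1) = ((i+1).choose m : ℝ) * ((i:ℝ) + 1 - m) := by
      have := Nat.choose_succ_right_eq (i+1) m
      have h3 : ((i + 1 - m : ℕ) : ℝ) = (i:ℝ) + 1 - m := by
        rw [Nat.cast_sub (by omega)]; push_cast; ring
      rw [← h3]
      exact_mod_cast this
    have h4 : ((m:ℝ)+1) ≠ 0 := by positivity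
    apply mul_left_cancel₀ h4
    rw [pow_succ]
    linear_combination h1 + (-1)^m * levelSum g (i+1) S 0 * h2

theorem upSum_compl {j : ℕ} {g : Finset α → ℝ} (hg : Harmonic j g) (S : Finset α) :
    upSum g j Sᶜ = (-1) ^ j * upSum g j S := by
  have h := levelSum_eq hg S j le_rfl
  have h0 : levelSum g j S 0 = upSum g j Sᶜ := by
    unfold levelSum upSum
    rw [← sum_filter]
    apply sum_congr _ (fun _ _ => rfl)
    ext J
    simp only [mem_filter, mem_powersetCard, subset_univ, true_and, card_eq_zero,
      ← disjoint_iff_inter_eq_empty, subset_compl_iff_disjoint_right]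
    tauto
  have h1 : levelSum g j S j = upSum g j S := by
    unfold levelSum upSum
    rw [← sum_filter]
    apply sum_congr _ (fun _ _ => rfl)
    ext J
    simp only [mem_filter, mem_powersetCard, subset_univ, true_and]
    constructor
    · rintro ⟨a, b⟩
      refine ⟨?_, a⟩
      rw [← inter_eq_left]
      exact eq_of_subset_of_card_le inter_subset_left (by omega)
    · rintro ⟨a, b⟩
      rw [inter_eq_left.2 a]; exact ⟨b, b⟩
  rw [h0, h1] at h
  rw [h, Nat.choose_self, ← mul_assoc, ← mul_assoc, ← mul_pow]
  simp

theorem sum_upSum_powersetCard (g : Finset α → ℝ) (j t : ℕ) (U : Finset α) (hj : j ≤ U.card)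
    (htu : t ≤ U.card) :
    ∑ T ∈ powersetCard t U, upSum g j T
      = (U.card.choose t * t.choose j / U.card.choose j : ℝ) * upSum g j U := by
  have h1 : ∀ T ∈ powersetCard t U, upSum g j T
      = ∑ J ∈ powersetCard j U, if J ⊆ T then g J else 0 := by
    intro T hT
    unfold upSum
    rw [← sum_filter]
    apply sum_congr _ (fun _ _ => rfl)
    ext J
    simp only [mem_powersetCard, mem_filter]
    constructor
    · rintro ⟨a, b⟩; exact ⟨⟨a.trans (mem_powersetCard.1 hT).1, b⟩, a⟩
    · rintro ⟨⟨_, b⟩, a⟩; exact ⟨a, b⟩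
  rw [sum_congr rfl h1, sum_comm]
  unfold upSum
  rw [mul_sum]
  apply sum_congr rfl
  intro J hJ
  obtain ⟨hJ1, hJ2⟩ := mem_powersetCard.1 hJ
  rw [← sum_filter, sum_const, nsmul_eq_mul]
  congr 1
  have hpos : (0:ℝ) < U.card.choose j := by exact_mod_cast Nat.choose_pos hj
  rw [eq_div_iff hpos.ne']
  by_cases hjt : j ≤ t
  · have hcard : ((powersetCard t U).filter (fun T => J ⊆ T)).card
        = (U.card - j).choose (t - j) := by
      have : (U \ J).card = U.card - j := by rw [card_sdiff_of_subset hJ1, hJ2]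
      rw [← this, ← card_powersetCard]
      apply card_bij' (fun T _ => T \ J) (fun R _ => R ∪ J)
      · intro T hT
        simp only [mem_filter, mem_powersetCard] at hT ⊢
        refine ⟨sdiff_subset_sdiff hT.1.1 (Subset.refl _), ?_⟩
        rw [card_sdiff_of_subset hT.2, hT.1.2, hJ2]
      · intro R hR
        simp only [mem_filter, mem_powersetCard] at hR ⊢
        have hd : Disjoint R J := disjoint_of_subset_left hR.1 sdiff_disjoint
        refine ⟨⟨union_subset (hR.1.trans sdiff_subset) hJ1, ?_⟩, subset_union_right⟩
        rw [card_union_of_disjoint hd, hR.2, hJ2]; omega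
      · intro T hT
        simp only [mem_filter] at hT
        exact sdiff_union_of_subset hT.2
      · intro R hR
        simp only [mem_powersetCard] at hR
        have hd : Disjoint R J := disjoint_of_subset_left hR.1 sdiff_disjoint
        exact union_sdiff_cancel_right hd
    rw [hcard]
    have := Nat.choose_mul (n := U.card) hjt
    have h' : (U.card.choose t : ℝ) * t.choose j
      = U.card.choose j * ((U.card - j).choose (t - j)) := by exact_mod_cast this
    rw [h']; ring
  · have : (powersetCard t U).filter (fun T => J ⊆ T) = ∅ := by
      apply filter_eq_empty_iff.2
      intro T hT h
      have := card_le_card h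
      have := (mem_powersetCard.1 hT).2
      omega
    rw [this, Nat.choose_eq_zero_of_lt (not_le.1 hjt)]
    simp

/-- Every function on a level splits into a harmonic function and an up-sum. -/
theorem exists_harmonic_split (k : ℕ) (f : Finset α → ℝ) :
    ∃ v f' : Finset α → ℝ, Harmonic (k+1) v ∧
      ∀ S, S.card = k + 1 → f S = v S + ∑ x ∈ S, f' (S.erase x) := by
  let Uop : EuclideanSpace ℝ (Finset α) →ₗ[ℝ] EuclideanSpace ℝ (Finset α) :=
    { toFun := fun f' => WithLp.toLp 2
        (fun S => if S.card = k + 1 then ∑ x ∈ S, f' (S.erase x) else 0)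
      map_add' := by
        intro a b
        ext S
        by_cases h : S.card = k + 1 <;> simp [h, sum_add_distrib]
      map_smul' := by
        intro c a
        ext S
        by_cases h : S.card = k + 1 <;> simp [h, mul_sum] }
  obtain ⟨u, hu, v, hv, huv⟩ :=
    Submodule.exists_add_mem_mem_orthogonal (K := LinearMap.range Uop) (WithLp.toLp 2 f)
  obtain ⟨f', rfl⟩ := hu
  refine ⟨fun S => v S, fun S => f' S, ?_, ?_⟩
  · intro I hI
    have h1 := (Submodule.mem_orthogonal _ _).1 hv
      (Uop (WithLp.toLp 2 (fun S => if S = I then 1 else 0))) ⟨_, rfl⟩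
    have h2 : ∑ S : Finset α, v S *
        (if S.card = k + 1 then ∑ x ∈ S, (if S.erase x = I then (1:ℝ) else 0) else 0) = 0 := by
      refine Eq.trans ?_ h1
      simp [Uop, PiLp.inner_apply]
    have h3 := sum_insert_reindex (univ : Finset α) k
      (fun J x => v J * (if J.erase x = I then (1:ℝ) else 0))
    have h4 : ∑ J ∈ powersetCard (k+1) (univ : Finset α), ∑ x ∈ J,
        v J * (if J.erase x = I then (1:ℝ) else 0) = 0 := by
      refine Eq.trans ?_ h2
      have hp : powersetCard (k+1) (univ : Finset α) = univ.filter (fun S => S.card = k + 1) := by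
        ext S; simp
      rw [hp, sum_filter]
      apply sum_congr rfl
      intro S _
      split_ifs
      · rw [mul_sum]
      · rw [mul_zero]
    rw [h4] at h3
    rw [← h3, sum_eq_single I]
    · rw [← compl_eq_univ_sdiff]
      apply sum_congr rfl
      intro x hx
      rw [erase_insert (by simpa using hx)]; simp
    · intro I' _ hne
      apply sum_eq_zero
      intro x hx
      rw [erase_insert (by simpa using hx)]; simp [hne]
    · intro h
      exfalso; apply h
      simp; omega
  · intro S hS
    have := congrArg (fun w : EuclideanSpace ℝ (Finset α) => w S) huv
    simp [Uop, hS] at this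
    linarith

theorem exists_harmonic_decomp (k : ℕ) : ∀ f : Finset α → ℝ,
    ∃ g : ℕ → Finset α → ℝ, (∀ j, Harmonic j (g j)) ∧
      ∀ S, S.card = k → f S = ∑ j ∈ range (k+1), upSum (g j) j S := by
  induction k with
  | zero =>
    intro f
    refine ⟨fun j => if j = 0 then f else 0, ?_, ?_⟩
    · intro j I hI
      have : j ≠ 0 := by omega
      simp [this]
    · intro S hS
      have : S = ∅ := card_eq_zero.1 hS
      subst this
      simp [upSum]
  | succ k ih =>
    intro f
    obtain ⟨v, f', hv, hf⟩ := exists_harmonic_split k f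
    obtain ⟨g, hg, hgf⟩ := ih f'
    refine ⟨fun j => if j = k + 1 then v else fun S => ((k:ℝ) + 1 - j) * g j S, ?_, ?_⟩
    · intro j
      by_cases h : j = k + 1
      · subst h; simpa using hv
      · simp only [h, if_false]
        intro I hI
        rw [← mul_sum, hg j I hI, mul_zero]
    · intro S hS
      rw [hf S hS, sum_range_succ, add_comm]
      congr 1
      · have h1 : ∀ x ∈ S, f' (S.erase x) = ∑ j ∈ range (k+1), upSum (g j) j (S.erase x) := by
          intro x hx
          exact hgf _ (by rw [card_erase_of_mem hx, hS]; simp)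
        rw [sum_congr rfl h1, sum_comm]
        apply sum_congr rfl
        intro j hj
        have hj' : j ≠ k + 1 := by have := mem_range.1 hj; omega
        rw [sum_upSum_erase, hS]
        simp only [hj', if_false, upSum, mul_sum]
        push_cast; rfl
      · simp only [if_true]
        rw [← hS, upSum_self]

end HarmonicSlices

theorem choose_ratio_antitone {k u : ℕ} (hku : k ≤ u) : ∀ j, 2 ≤ j → j ≤ k →
    (k.choose j : ℝ) / u.choose j ≤ (k.choose 2 : ℝ) / u.choose 2 := by
  intro j hj
  induction j, hj using Nat.le_induction with
  | base => intro _; exact le_rfl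
  | succ j hj ih =>
    intro hjk
    refine le_trans ?_ (ih (by omega))
    have p1 : (0:ℝ) < u.choose j := by exact_mod_cast Nat.choose_pos (by omega)
    have p2 : (0:ℝ) < u.choose (j+1) := by exact_mod_cast Nat.choose_pos (by omega)
    rw [div_le_div_iff₀ p2 p1]
    have e1 : (k.choose (j+1) : ℝ) * (j+1) = k.choose j * ((k:ℝ) - j) := by
      have := Nat.choose_succ_right_eq k j
      rw [← Nat.cast_sub (by omega)]
      exact_mod_cast this
    have e2 : (u.choose (j+1) : ℝ) * (j+1) = u.choose j * ((u:ℝ) - j) := by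
      have := Nat.choose_succ_right_eq u j
      rw [← Nat.cast_sub (by omega)]
      exact_mod_cast this
    have hp : (0:ℝ) < (j:ℝ) + 1 := by positivity
    have hku' : (k:ℝ) ≤ u := by exact_mod_cast hku
    have p3 : (0:ℝ) ≤ k.choose j := by positivity
    refine le_of_mul_le_mul_right ?_ hp
    calc (k.choose (j+1) : ℝ) * u.choose j * (j+1)
        = (k.choose j * u.choose j) * ((k:ℝ) - j) := by rw [mul_right_comm, e1]; ring
      _ ≤ (k.choose j * u.choose j) * ((u:ℝ) - j) := by gcongr
      _ = (k.choose j : ℝ) * u.choose (j+1) * (j+1) := by rw [mul_assoc _ _ ((j:ℝ)+1), e2]; ring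

theorem eigenvalue_nonneg {n k t : ℕ} (ht : 1 ≤ t) (htk : t < k) (hn : 2 * k ≤ n)
    (h : (k:ℝ) * (k - 1) ≤ ((k:ℝ) - t) * ((n:ℝ) - k - 1)) (j : ℕ) (hj : j ≤ k) :
    (0:ℝ) ≤ ((n-t-1).choose (k-t-1) : ℝ)
      - (-1)^j * ((t.choose j : ℝ) / (n-k).choose j * (n-t-j).choose (k-t))
      + (-1)^j * ((k.choose j : ℝ) / (n-k).choose j * (n-t-1).choose (k-t)) := by
  have hD : ((n-t-1).choose (k-t-1) : ℝ) * ((n:ℝ) - k)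
      = (n-t-1).choose (k-t) * ((k:ℝ) - t) := by
    have := Nat.choose_succ_right_eq (n-t-1) (k-t-1)
    rw [← Nat.cast_sub (by omega), ← Nat.cast_sub (by omega)]
    have a : k - t - 1 + 1 = k - t := by omega
    have b : n - t - 1 - (k - t - 1) = n - k := by omega
    rw [a, b] at this
    exact_mod_cast this.symm
  have hnk : (0:ℝ) < (n:ℝ) - k := by
    have : (k:ℝ) < n := by exact_mod_cast (by omega : k < n)
    linarith
  rcases Nat.lt_or_ge j 2 with hj2 | hj2
  · interval_cases j
    · have : ((n-t).choose (k-t) : ℝ) = (n-t-1).choose (k-t-1) + (n-t-1).choose (k-t) := by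
        have := Nat.choose_succ_succ (n-t-1) (k-t-1)
        have a : k - t - 1 + 1 = k - t := by omega
        have b : n - t - 1 + 1 = n - t := by omega
        rw [Nat.succ_eq_add_one, Nat.succ_eq_add_one, a, b] at this
        exact_mod_cast this
      simp [this]
    · simp only [Nat.choose_one_right, pow_one]
      rw [Nat.cast_sub (by omega)]
      apply le_of_eq
      field_simp
      linarith
  · have hw : ((n-t-j).choose (k-t) : ℝ) ≤ (n-t-1).choose (k-t) := by
      exact_mod_cast Nat.choose_le_choose _ (by omega)
    have p1 : (0:ℝ) < (n-k).choose j := by exact_mod_cast Nat.choose_pos (by omega)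
    have htk' : (t.choose j : ℝ) / (n-k).choose j ≤ (k.choose j : ℝ) / (n-k).choose j := by
      gcongr
    rcases Nat.even_or_odd j with he | ho
    · rw [he.neg_one_pow]
      have : (t.choose j : ℝ) / (n-k).choose j * (n-t-j).choose (k-t)
        ≤ (k.choose j : ℝ) / (n-k).choose j * (n-t-1).choose (k-t) := by gcongr
      have : (0:ℝ) ≤ (n-t-1).choose (k-t-1) := by positivity
      linarith
    · rw [ho.neg_one_pow]
      have h1 : (0:ℝ) ≤ (t.choose j : ℝ) / (n-k).choose j * (n-t-j).choose (k-t) := by positivity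
      have h2 := choose_ratio_antitone (u := n - k) (by omega) j hj2 hj
      have hn1 : (0:ℝ) < (n:ℝ) - k - 1 := by
        have : (k:ℝ) + 1 < n := by exact_mod_cast (by omega : k + 1 < n)
        linarith
      have h3 : (k.choose 2 : ℝ) / (n-k).choose 2 ≤ ((k:ℝ) - t) / ((n:ℝ) - k) := by
        rw [Nat.cast_choose_two, Nat.cast_choose_two, Nat.cast_sub (by omega),
          div_le_div_iff₀ (by positivity) hnk]
        have := mul_le_mul_of_nonneg_right h hnk.le
        linarith
      have h4 : ((n-t-1).choose (k-t-1) : ℝ)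
          = ((k:ℝ) - t) / ((n:ℝ) - k) * (n-t-1).choose (k-t) := by
        field_simp; linarith
      have h5 := mul_le_mul_of_nonneg_right (h2.trans h3)
        (by positivity : (0:ℝ) ≤ (n-t-1).choose (k-t))
      linarith

theorem t_degree_core {α : Type*} [Fintype α] [DecidableEq α] {n k t : ℕ}
    (hα : Fintype.card α = n) (ht : 1 ≤ t) (htk : t < k)
    (hn : 2 * k ≤ n) (h : (k:ℝ) * (k - 1) ≤ ((k:ℝ) - t) * ((n:ℝ) - k - 1))
    (f : Finset α → ℝ) :
    (∑ S ∈ powersetCard k univ, f S * ∑ T ∈ powersetCard t Sᶜ, downSum f k T)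
      ≤ ((n-t-1).choose (k-t-1) : ℝ) * (n-k).choose t * ∑ S ∈ powersetCard k univ, f S * f S
        + ((n-k).choose t * (n-t-1).choose (k-t) / (n-k).choose k : ℝ)
          * ∑ S ∈ powersetCard k univ, f S * ∑ R ∈ powersetCard k Sᶜ, f R := by
  obtain ⟨g, hg, hf⟩ := exists_harmonic_decomp k f
  set c : ℝ := ((n-t-1).choose (k-t-1) : ℝ) * (n-k).choose t with hc
  set s : ℝ := ((n-k).choose t * (n-t-1).choose (k-t) / (n-k).choose k : ℝ) with hs
  let m : ℕ → ℝ := fun j => (n-k).choose t * (((n-t-1).choose (k-t-1) : ℝ)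
      - (-1)^j * ((t.choose j : ℝ) / (n-k).choose j * (n-t-j).choose (k-t))
      + (-1)^j * ((k.choose j : ℝ) / (n-k).choose j * (n-t-1).choose (k-t)))
  have hm : ∀ j ∈ range (k+1), 0 ≤ m j := by
    intro j hj
    exact mul_nonneg (by positivity)
      (eigenvalue_nonneg ht htk hn h j (by have := mem_range.1 hj; omega))
  have hcc : ∀ S ∈ powersetCard k (univ : Finset α), Sᶜ.card = n - k := by
    intro S hS
    rw [card_compl, hα, (mem_powersetCard.1 hS).2]
  have hdown : ∀ T : Finset α, T.card = t → downSum f k T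
      = ∑ j ∈ range (k+1), ((n-t-j).choose (k-t) : ℝ) * upSum (g j) j T := by
    intro T hT
    have : downSum f k T = ∑ j ∈ range (k+1), downSum (upSum (g j) j) k T := by
      unfold downSum
      rw [sum_comm]
      apply sum_congr rfl
      intro S hS
      exact hf S (mem_powersetCard.1 (mem_filter.1 hS).1).2
    rw [this]
    apply sum_congr rfl
    intro j hj
    have := mem_range.1 hj
    rw [downSum_upSum (hg j) (by omega) (k - t) T (by omega), hα, hT]
  have hL : ∀ S ∈ powersetCard k (univ : Finset α),
      c * f S - (∑ T ∈ powersetCard t Sᶜ, downSum f k T) + s * ∑ R ∈ powersetCard k Sᶜ, f R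
        = ∑ j ∈ range (k+1), m j * upSum (g j) j S := by
    intro S hS
    have hSc := (mem_powersetCard.1 hS).2
    have h1 : ∑ T ∈ powersetCard t Sᶜ, downSum f k T
        = ∑ j ∈ range (k+1), ((n-t-j).choose (k-t) : ℝ) *
          (((n-k).choose t * t.choose j / (n-k).choose j : ℝ) * ((-1)^j * upSum (g j) j S)) := by
      rw [sum_congr rfl (fun T hT => hdown T (mem_powersetCard.1 hT).2), sum_comm]
      apply sum_congr rfl
      intro j hj
      have := mem_range.1 hj
      have hcc' := hcc S hS
      rw [← mul_sum, sum_upSum_powersetCard (g j) j t Sᶜ (by omega) (by omega), hcc',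
        upSum_compl (hg j)]
    have h2 : ∑ R ∈ powersetCard k Sᶜ, f R
        = ∑ j ∈ range (k+1),
          (((n-k).choose k * k.choose j / (n-k).choose j : ℝ) * ((-1)^j * upSum (g j) j S)) := by
      rw [sum_congr rfl (fun T hT => hf T (mem_powersetCard.1 hT).2), sum_comm]
      apply sum_congr rfl
      intro j hj
      have := mem_range.1 hj
      have hcc' := hcc S hS
      rw [sum_upSum_powersetCard (g j) j k Sᶜ (by omega) (by omega), hcc', upSum_compl (hg j)]
    rw [h1, h2, hf S hSc, mul_sum, mul_sum, ← sum_sub_distrib, ← sum_add_distrib]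
    apply sum_congr rfl
    intro j hj
    have p1 : ((n-k).choose k : ℝ) ≠ 0 := by
      exact_mod_cast (Nat.choose_pos (by omega)).ne'
    have p2 : s * (n-k).choose k = (n-k).choose t * (n-t-1).choose (k-t) := by
      rw [hs]; field_simp
    simp only [m, hc]
    linear_combination (k.choose j / (n-k).choose j : ℝ) * ((-1)^j * upSum (g j) j S) * p2
  have hkey : 0 ≤ ∑ S ∈ powersetCard k univ, f S *
      (c * f S - (∑ T ∈ powersetCard t Sᶜ, downSum f k T) + s * ∑ R ∈ powersetCard k Sᶜ, f R) := by
    have e : ∑ S ∈ powersetCard k univ, f S *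
      (c * f S - (∑ T ∈ powersetCard t Sᶜ, downSum f k T) + s * ∑ R ∈ powersetCard k Sᶜ, f R)
      = ∑ i ∈ range (k+1), ∑ j ∈ range (k+1), m j *
          ∑ S ∈ powersetCard k (univ : Finset α), upSum (g i) i S * upSum (g j) j S := by
      have e1 : ∀ S ∈ powersetCard k (univ : Finset α), f S *
        (c * f S - (∑ T ∈ powersetCard t Sᶜ, downSum f k T) + s * ∑ R ∈ powersetCard k Sᶜ, f R)
        = ∑ i ∈ range (k+1), ∑ j ∈ range (k+1), m j * (upSum (g i) i S * upSum (g j) j S) := by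
        intro S hS
        rw [hL S hS, hf S (mem_powersetCard.1 hS).2, sum_mul_sum]
        apply sum_congr rfl; intro i _
        apply sum_congr rfl; intro j _
        ring
      rw [sum_congr rfl e1, sum_comm]
      apply sum_congr rfl; intro i _
      rw [sum_comm]
      apply sum_congr rfl; intro j _
      rw [mul_sum]
    rw [e]
    apply sum_nonneg
    intro i hi
    rw [sum_eq_single i]
    · exact mul_nonneg (hm i hi) (sum_nonneg fun S _ => mul_self_nonneg _)
    · intro j hj hne
      have hi' := mem_range.1 hi
      have hj' := mem_range.1 hj
      rcases lt_or_gt_of_ne hne with hlt | hlt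
      · simp_rw [mul_comm (upSum (g i) i _)]
        rw [upSum_orthogonal (hg j) (hg i) hlt (by omega) (by omega), mul_zero]
      · rw [upSum_orthogonal (hg i) (hg j) hlt (by omega) (by omega), mul_zero]
    · intro h; exact absurd hi h
  have e2 : ∑ S ∈ powersetCard k univ, f S *
      (c * f S - (∑ T ∈ powersetCard t Sᶜ, downSum f k T) + s * ∑ R ∈ powersetCard k Sᶜ, f R)
      = c * (∑ S ∈ powersetCard k univ, f S * f S)
        - (∑ S ∈ powersetCard k univ, f S * ∑ T ∈ powersetCard t Sᶜ, downSum f k T)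
        + s * ∑ S ∈ powersetCard k univ, f S * ∑ R ∈ powersetCard k Sᶜ, f R := by
    rw [mul_sum, mul_sum, ← sum_sub_distrib, ← sum_add_distrib]
    apply sum_congr rfl; intro S _
    ring
  rw [e2] at hkey
  linarith

/-- t-degree version of the Erdős–Ko–Rado theorem (Theorem 4, second part):
if `1 ≤ t < k` and `n ≥ 2k + 3t/(1 - t/k)`, then any intersecting family `F`
of `k`-subsets of `[n]` satisfies `δ_t(F) ≤ C(n-t-1, k-t-1)`. -/
theorem t_degree_EKR (n k t : ℕ) (ht : 1 ≤ t) (htk : t < k)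
    (hn : 2 * (k : ℝ) + 3 * (t : ℝ) / (1 - (t : ℝ) / (k : ℝ)) ≤ (n : ℝ))
    (F : Finset (Finset (Fin n)))
    (hcard : ∀ A ∈ F, A.card = k)
    (hint : ∀ A ∈ F, ∀ B ∈ F, (A ∩ B).Nonempty) :
    ∃ T : Finset (Fin n), T.card = t ∧
      (F.filter (fun A => T ⊆ A)).card ≤ (n - t - 1).choose (k - t - 1) := by
  by_contra! hcon
  have htk' : (t:ℝ) < k := by exact_mod_cast htk
  have ht' : (1:ℝ) ≤ t := by exact_mod_cast ht
  have hkt : (0:ℝ) < (k:ℝ) - t := by linarith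
  have hk0 : (0:ℝ) < k := by linarith
  have hfrac : 3 * (t : ℝ) / (1 - (t : ℝ) / (k : ℝ)) = 3 * t * k / (k - t) := by
    have : (1 - (t : ℝ) / (k : ℝ)) = (k - t) / k := by field_simp
    rw [this]; field_simp
  rw [hfrac] at hn
  have hfpos : (0:ℝ) ≤ 3 * t * k / (k - t) := by positivity
  have hn2 : 2 * k ≤ n := by
    have : 2 * (k:ℝ) ≤ n := by linarith
    exact_mod_cast this
  have hh : (k:ℝ) * (k - 1) ≤ ((k:ℝ) - t) * ((n:ℝ) - k - 1) := by
    have h1 : 3 * (t:ℝ) * k / (k - t) * (k - t) = 3 * t * k := by field_simp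
    have h2 := mul_le_mul_of_nonneg_right hn hkt.le
    have h3 : (0:ℝ) ≤ t * k := by positivity
    nlinarith
  let f : Finset (Fin n) → ℝ := fun S => if S ∈ F then 1 else 0
  have hFP : F ⊆ powersetCard k univ := by
    intro A hA; simp [hcard A hA]
  have red : ∀ φ : Finset (Fin n) → ℝ,
      ∑ S ∈ powersetCard k univ, f S * φ S = ∑ S ∈ F, φ S := by
    intro φ
    simp only [f, ite_mul, one_mul, zero_mul]
    rw [← sum_filter]
    apply sum_congr _ (fun _ _ => rfl)
    ext S
    simp only [mem_filter]
    exact ⟨fun h => h.2, fun h => ⟨hFP h, h⟩⟩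
  have hdown : ∀ T : Finset (Fin n), downSum f k T = (F.filter (fun A => T ⊆ A)).card := by
    intro T
    unfold downSum
    simp only [f]
    rw [← sum_filter, sum_const, nsmul_eq_mul, mul_one]
    congr 2
    ext S
    simp only [mem_filter]
    exact ⟨fun h => ⟨h.2, h.1.2⟩, fun h => ⟨⟨hFP h.1, h.2⟩, h.1⟩⟩
  have core := t_degree_core (α := Fin n) (by simp) ht htk hn2 hh f
  rw [red, red, red] at core
  have hzero : ∑ S ∈ F, ∑ R ∈ powersetCard k Sᶜ, f R = 0 := by
    apply sum_eq_zero; intro S hS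
    apply sum_eq_zero; intro R hR
    simp only [f]
    rw [if_neg]
    intro hRF
    obtain ⟨x, hx⟩ := hint S hS R hRF
    have h1 := mem_inter.1 hx
    exact (mem_compl.1 ((mem_powersetCard.1 hR).1 h1.2)) h1.1
  have hone : ∑ S ∈ F, f S = F.card := by
    simp [f]
  rw [hzero, hone, mul_zero, add_zero] at core
  set D : ℝ := ((n-t-1).choose (k-t-1) : ℝ) with hD
  have hlow : ∑ S ∈ F, ((n-k).choose t : ℝ) * (D + 1)
      ≤ ∑ S ∈ F, ∑ T ∈ powersetCard t Sᶜ, downSum f k T := by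
    apply sum_le_sum
    intro S hS
    have hSc : Sᶜ.card = n - k := by rw [card_compl, hcard S hS]; simp
    have : ((n-k).choose t : ℝ) * (D + 1) = ∑ T ∈ powersetCard t Sᶜ, (D + 1) := by
      rw [sum_const, card_powersetCard, hSc, nsmul_eq_mul]
    rw [this]
    apply sum_le_sum
    intro T hT
    rw [hdown, hD]
    exact_mod_cast hcon T (mem_powersetCard.1 hT).2
  rw [sum_const, nsmul_eq_mul] at hlow
  have hFpos : (0:ℝ) < F.card := by
    obtain ⟨T, _, hT⟩ := exists_subset_card_eq (s := (univ : Finset (Fin n))) (n := t)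
      (by simp; omega)
    have h1 := hcon T hT
    have h2 : (F.filter (fun A => T ⊆ A)).card ≤ F.card := card_filter_le _ _
    exact_mod_cast (by omega : 0 < F.card)
  have hcpos : (0:ℝ) < (n-k).choose t := by exact_mod_cast Nat.choose_pos (by omega)
  have := mul_pos hFpos hcpos
  nlinarith
end
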